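/- For a ∈ ℝ, let Ã(a) be the 3×3 real matrix with rows (−(25a+10), 25a+10, 0), (28−35a, 29a−1, 0), (0, 0, −(a+8)/3). Let P be a symmetric positive definite 3×3 real matrix, B a 3×m real matrix and K an m×3 real matrix such that both (Ã(0) + BK)ᵀ P + P (Ã(0) + BK) and (Ã(1) + BK)ᵀ P + P (Ã(1) + BK) are negative definite. Let α : ℝ → ℝ be an arbitrary switching signal with α(t) ∈ [0, 1] for all t, and let e : ℝ → ℝ³ satisfy, for every t ≥ 0, e′(t) = (Ã(α(t)) + BK) e(t). Then e(t) → 0 as t → +∞. -/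

import Mathlib

open Matrix

/-!
The quadratic form `V v = vᵀ P v` is a common Lyapunov function for all the closed-loop matrices
`Ã(a) + B K`, `a ∈ [0, 1]`: the form `vᵀ ((Ã(a) + B K)ᵀ P + P (Ã(a) + B K)) v` is affine in `a`, so
the vertex inequalities bound it by `-c ‖v‖²` with the same `c > 0` for every `a`
(`exists_pos_mul_sq_norm_le`). As `V v ≤ C ‖v‖²`, the derivative of `V` along the error trajectory
is at most `-(c / C) V`, whatever the switching signal, so `V` decays exponentially
(`le_mul_exp_neg_of_deriv_le`). Positive definiteness of `P` transfers the decay to the error.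
-/

lemma continuous_quadForm {n : ℕ} (M : Matrix (Fin n) (Fin n) ℝ) :
    Continuous fun v : Fin n → ℝ => v ⬝ᵥ M.mulVec v := by
  fun_prop

/-- Scaling to the unit sphere of the sup norm carries bounds on the sphere to the whole space. -/
lemma quadForm_eq_sq_norm_mul {n : ℕ} (M : Matrix (Fin n) (Fin n) ℝ) (v : Fin n → ℝ) (hv : v ≠ 0) :
    v ⬝ᵥ M.mulVec v = ‖v‖ ^ 2 * ((‖v‖⁻¹ • v) ⬝ᵥ M.mulVec (‖v‖⁻¹ • v)) := by
  have h : ‖v‖ ≠ 0 := norm_ne_zero_iff.mpr hv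
  rw [mulVec_smul, smul_dotProduct, dotProduct_smul, smul_eq_mul, smul_eq_mul]
  field_simp

lemma inv_norm_smul_mem_sphere {n : ℕ} (v : Fin n → ℝ) (hv : v ≠ 0) :
    ‖v‖⁻¹ • v ∈ Metric.sphere (0 : Fin n → ℝ) 1 := by
  have h : ‖v‖ ≠ 0 := norm_ne_zero_iff.mpr hv
  simp [norm_smul, h]

lemma exists_pos_mul_sq_norm_le {n : ℕ} (M : Matrix (Fin n) (Fin n) ℝ)
    (hM : ∀ v : Fin n → ℝ, v ≠ 0 → 0 < v ⬝ᵥ M.mulVec v) :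
    ∃ c : ℝ, 0 < c ∧ ∀ v : Fin n → ℝ, c * ‖v‖ ^ 2 ≤ v ⬝ᵥ M.mulVec v := by
  obtain ⟨c, hc, hcS⟩ : ∃ c : ℝ, 0 < c ∧
      ∀ v ∈ Metric.sphere (0 : Fin n → ℝ) 1, c ≤ v ⬝ᵥ M.mulVec v := by
    rcases (Metric.sphere (0 : Fin n → ℝ) 1).eq_empty_or_nonempty with hS | hS
    · exact ⟨1, one_pos, by simp [hS]⟩
    · obtain ⟨u, hu, hmin⟩ :=
        (isCompact_sphere (0 : Fin n → ℝ) 1).exists_isMinOn hS (continuous_quadForm M).continuousOn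
      exact ⟨_, hM u (ne_zero_of_mem_unit_sphere ⟨u, hu⟩), fun v hv => hmin hv⟩
  refine ⟨c, hc, fun v => ?_⟩
  rcases eq_or_ne v 0 with rfl | hv
  · simp
  · rw [quadForm_eq_sq_norm_mul M v hv, mul_comm]
    exact mul_le_mul_of_nonneg_left (hcS _ (inv_norm_smul_mem_sphere v hv)) (sq_nonneg _)

lemma exists_quadForm_le_mul_sq_norm {n : ℕ} (M : Matrix (Fin n) (Fin n) ℝ) :
    ∃ C : ℝ, 0 < C ∧ ∀ v : Fin n → ℝ, v ⬝ᵥ M.mulVec v ≤ C * ‖v‖ ^ 2 := by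
  obtain ⟨C, hC⟩ :=
    (isCompact_sphere (0 : Fin n → ℝ) 1).bddAbove_image (continuous_quadForm M).continuousOn
  refine ⟨max C 1, by positivity, fun v => ?_⟩
  rcases eq_or_ne v 0 with rfl | hv
  · simp
  · rw [quadForm_eq_sq_norm_mul M v hv, mul_comm]
    refine mul_le_mul_of_nonneg_right (le_trans ?_ (le_max_left C 1)) (sq_nonneg _)
    exact hC (Set.mem_image_of_mem _ (inv_norm_smul_mem_sphere v hv))

/-- The derivative of `eᵀ P e` along a trajectory of `e' = A e`; only the value of `A` at the time
`t` enters. -/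
lemma hasDerivAt_quadForm {n : ℕ} (P A : Matrix (Fin n) (Fin n) ℝ) (e : ℝ → Fin n → ℝ) (t : ℝ)
    (he : HasDerivAt e (A.mulVec (e t)) t) :
    HasDerivAt (fun s => e s ⬝ᵥ P.mulVec (e s)) (e t ⬝ᵥ (Aᵀ * P + P * A).mulVec (e t)) t := by
  have hc := hasDerivAt_pi.mp he
  have hP : ∀ i, HasDerivAt (fun s => P.mulVec (e s) i) (P.mulVec (A.mulVec (e t)) i) t := fun i =>
    HasDerivAt.fun_sum fun j (_ : j ∈ Finset.univ) => (hc j).const_mul (P i j)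
  have h : HasDerivAt (fun s => e s ⬝ᵥ P.mulVec (e s)) _ t :=
    HasDerivAt.fun_sum fun i (_ : i ∈ Finset.univ) => (hc i).mul (hP i)
  convert h using 1
  rw [Finset.sum_add_distrib, add_mulVec, dotProduct_add, ← mulVec_mulVec, ← mulVec_mulVec,
    dotProduct_mulVec (e t) Aᵀ, vecMul_transpose]
  rfl

/-- A differential form of Grönwall's inequality that needs no regularity of `V'`. -/
lemma le_mul_exp_neg_of_deriv_le (V V' : ℝ → ℝ) (k : ℝ)
    (hV : ∀ t, 0 ≤ t → HasDerivAt V (V' t) t) (hle : ∀ t, 0 ≤ t → V' t ≤ -k * V t)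
    (t : ℝ) (ht : 0 ≤ t) : V t ≤ V 0 * Real.exp (-(k * t)) := by
  have hd : ∀ s, 0 ≤ s → HasDerivAt (fun s => V s * Real.exp (k * s))
      (V' s * Real.exp (k * s) + V s * (Real.exp (k * s) * (k * 1))) s := fun s hs =>
    (hV s hs).mul (((hasDerivAt_id s).const_mul k).exp)
  have hanti : AntitoneOn (fun s => V s * Real.exp (k * s)) (Set.Ici 0) := by
    refine antitoneOn_of_hasDerivWithinAt_nonpos (convex_Ici 0)
      (fun s hs => (hd s hs).continuousAt.continuousWithinAt)
      (fun s hs => (hd s (interior_subset hs)).hasDerivWithinAt) fun s hs => ?_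
    have := mul_le_mul_of_nonneg_right (hle s (interior_subset hs)) (Real.exp_pos (k * s)).le
    linarith
  have h := hanti (Set.mem_Ici.mpr le_rfl) (Set.mem_Ici.mpr ht) ht
  simp only [mul_zero, Real.exp_zero, mul_one] at h
  rwa [Real.exp_neg, ← div_eq_mul_inv, le_div_iff₀ (Real.exp_pos _)]

/-- The paper's main guaranteed-synchronization result: a single feedback gain `K`
certified by the Lyapunov matrix inequalities at the two polytope vertices `Ã(0)`
and `Ã(1)` drives the synchronization error of the switched unified chaotic system
to zero under arbitrary switching of the key parameter `α(t) ∈ [0,1]`. -/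
theorem unified_chaotic_switched_synchronization {m : ℕ}
    (Atil : ℝ → Matrix (Fin 3) (Fin 3) ℝ)
    (hAtil : ∀ a : ℝ, Atil a =
      !![-(25 * a + 10), 25 * a + 10, 0;
         28 - 35 * a, 29 * a - 1, 0;
         0, 0, -((a + 8) / 3)])
    (P : Matrix (Fin 3) (Fin 3) ℝ)
    (hPsymm : Pᵀ = P)
    (hPpos : ∀ v : Fin 3 → ℝ, v ≠ 0 → 0 < v ⬝ᵥ P.mulVec v)
    (B : Matrix (Fin 3) (Fin m) ℝ) (K : Matrix (Fin m) (Fin 3) ℝ)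
    (h0 : ∀ v : Fin 3 → ℝ, v ≠ 0 →
      v ⬝ᵥ ((Atil 0 + B * K)ᵀ * P + P * (Atil 0 + B * K)).mulVec v < 0)
    (h1 : ∀ v : Fin 3 → ℝ, v ≠ 0 →
      v ⬝ᵥ ((Atil 1 + B * K)ᵀ * P + P * (Atil 1 + B * K)).mulVec v < 0)
    (α : ℝ → ℝ) (hα : ∀ t : ℝ, α t ∈ Set.Icc (0 : ℝ) 1)
    (e : ℝ → (Fin 3 → ℝ))
    (he : ∀ t : ℝ, 0 ≤ t →
      HasDerivAt e ((Atil (α t) + B * K).mulVec (e t)) t) :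
    Filter.Tendsto e Filter.atTop (nhds 0) := by
  have hconv : ∀ a : ℝ, Atil a + B * K =
      (1 - a) • (Atil 0 + B * K) + a • (Atil 1 + B * K) := by
    intro a
    have hA : Atil a = (1 - a) • Atil 0 + a • Atil 1 := by
      rw [hAtil a, hAtil 0, hAtil 1]
      ext i j
      fin_cases i <;> fin_cases j <;> simp <;> ring
    rw [hA]
    module
  have hQ : ∀ (a : ℝ) (v : Fin 3 → ℝ),
      v ⬝ᵥ ((Atil a + B * K)ᵀ * P + P * (Atil a + B * K)).mulVec v =
        (1 - a) * (v ⬝ᵥ ((Atil 0 + B * K)ᵀ * P + P * (Atil 0 + B * K)).mulVec v) +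
        a * (v ⬝ᵥ ((Atil 1 + B * K)ᵀ * P + P * (Atil 1 + B * K)).mulVec v) := by
    intro a v
    rw [hconv a]
    generalize Atil 0 + B * K = A₀
    generalize Atil 1 + B * K = A₁
    simp only [transpose_add, transpose_smul, Matrix.add_mul, Matrix.mul_add, Matrix.smul_mul,
      Matrix.mul_smul, add_mulVec, smul_mulVec, dotProduct_add, dotProduct_smul, smul_eq_mul]
    ring
  obtain ⟨c₀, hc₀, hb₀⟩ := exists_pos_mul_sq_norm_le
    (-((Atil 0 + B * K)ᵀ * P + P * (Atil 0 + B * K))) fun v hv => by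
      rw [neg_mulVec, dotProduct_neg]; exact neg_pos.mpr (h0 v hv)
  obtain ⟨c₁, hc₁, hb₁⟩ := exists_pos_mul_sq_norm_le
    (-((Atil 1 + B * K)ᵀ * P + P * (Atil 1 + B * K))) fun v hv => by
      rw [neg_mulVec, dotProduct_neg]; exact neg_pos.mpr (h1 v hv)
  simp only [neg_mulVec, dotProduct_neg] at hb₀ hb₁
  obtain ⟨p, hp, hpP⟩ := exists_pos_mul_sq_norm_le P hPpos
  obtain ⟨C, hC, hCP⟩ := exists_quadForm_le_mul_sq_norm P
  have hc : 0 < min c₀ c₁ := lt_min hc₀ hc₁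
  generalize hcdef : min c₀ c₁ = c at hc
  have hcc₀ : c ≤ c₀ := hcdef ▸ min_le_left _ _
  have hcc₁ : c ≤ c₁ := hcdef ▸ min_le_right _ _
  have hdecay := le_mul_exp_neg_of_deriv_le (fun s => e s ⬝ᵥ P.mulVec (e s)) _ (c / C)
    (fun t ht => hasDerivAt_quadForm P _ e t (he t ht)) fun t _ => by
      obtain ⟨ha0, ha1⟩ := hα t
      have hV : c / C * (e t ⬝ᵥ P.mulVec (e t)) ≤ c * ‖e t‖ ^ 2 := by
        rw [div_mul_eq_mul_div, div_le_iff₀ hC]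
        nlinarith [mul_le_mul_of_nonneg_left (hCP (e t)) hc.le]
      have hn := sq_nonneg ‖e t‖
      have e₀ := mul_le_mul_of_nonneg_left
        ((mul_le_mul_of_nonneg_right hcc₀ hn).trans (hb₀ (e t))) (sub_nonneg.mpr ha1)
      have e₁ := mul_le_mul_of_nonneg_left
        ((mul_le_mul_of_nonneg_right hcc₁ hn).trans (hb₁ (e t))) ha0
      rw [hQ (α t) (e t)]
      linarith
  have hk : 0 < c / C := div_pos hc hC
  have hexp : Filter.Tendsto
      (fun t => (e 0 ⬝ᵥ P.mulVec (e 0)) * Real.exp (-(c / C * t)) / p) Filter.atTop (nhds 0) := by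
    have h := Real.tendsto_exp_neg_atTop_nhds_zero.comp (Filter.tendsto_id.const_mul_atTop hk)
    simpa using (h.const_mul (e 0 ⬝ᵥ P.mulVec (e 0))).div_const p
  have hsq : Filter.Tendsto (fun t => ‖e t‖ ^ 2) Filter.atTop (nhds 0) := by
    refine squeeze_zero' (Filter.Eventually.of_forall fun t => sq_nonneg _) ?_ hexp
    filter_upwards [Filter.eventually_ge_atTop 0] with t ht
    rw [le_div_iff₀ hp, mul_comm]
    exact (hpP (e t)).trans (hdecay t ht)
  rw [tendsto_zero_iff_norm_tendsto_zero]
  simpa using hsq.sqrt
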